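/- Let n ≥ 1 and p > n. There exists a constant C = C(n,p) > 0 such that for every domain Ω ⊂ ℝⁿ containing the origin and having finite Lebesgue measure Lⁿ(Ω), and for every u ∈ C_c^∞(Ω \ {0}), one has sup_{x ∈ Ω} |u(x)| ≤ C · (Lⁿ(Ω))^{1/n − 1/p} · ( ∫_Ω |∇u|^p dx − ((p−n)/p)^p ∫_Ω |u(x)|^p / |x|^p dx )^{1/p}. -/

import Mathlib

open MeasureTheory Metric Set

open Module Topology

open scoped Gradient InnerProductSpace

/-! With `n = dim E`, `a = (p - n) / p` and `A = a * u * y / ‖y‖ ^ 2`, an integration by parts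
turns the Hardy difference into `∫ R`, where `R ≥ 0` is the Bregman divergence of `‖·‖ ^ p`
between `A` and `∇u`. For `n < q < p` the exponent `a` exceeds `(q - n) / q`, the one at which
`‖y‖ ^ a` is the virtual extremal of the `q`-Hardy inequality, so `∫ ‖A‖ ^ q ≤ K ∫ ‖∇u - A‖ ^ q`.
Since `‖∇u - A‖ ^ q ≤ ε ‖A‖ ^ q + C R ^ (q / p)`, the first term is absorbed and
`∫ ‖∇u‖ ^ q ≤ C ∫ R ^ (q / p)`. Hölder's inequality bounds the right-hand side by the Hardy
difference, and as `q > n` Morrey's inequality bounds `u` by the left-hand side: average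
`u(x) = -∫₀¹ ∇u(x + ty) · y dt` over those `y`, in a ball of twice the measure of the support,
with `u(x + y) = 0`. -/

section Powers

lemma rpow_sub_one_mul_self {x p : ℝ} (hx : 0 ≤ x) (hp : p ≠ 0) : x ^ (p - 1) * x = x ^ p := by
  rw [← Real.rpow_add_one' hx (by simpa using hp), sub_add_cancel]

lemma rpow_sub_two_mul_sq {x p : ℝ} (hx : 0 ≤ x) (hp : p ≠ 0) : x ^ (p - 2) * x ^ 2 = x ^ p := by
  rw [← Real.rpow_add_natCast' hx (by simpa using hp)]
  simp

lemma rpow_sub_two_mul_self {x p : ℝ} (hx : 0 ≤ x) (hp : p ≠ 1) :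
    x ^ (p - 2) * x = x ^ (p - 1) := by
  rw [← rpow_sub_one_mul_self hx (sub_ne_zero.mpr hp)]
  ring_nf

lemma rpow_add_mul_sub_lt_rpow {p s t : ℝ} (hp : 1 < p) (hs : 0 < s) (ht : 0 ≤ t) (hts : t ≠ s) :
    s ^ p + p * s ^ (p - 1) * (t - s) < t ^ p := by
  have hratio : t / s - 1 ≠ 0 := sub_ne_zero.mpr fun h => hts ((div_eq_one_iff_eq hs.ne').mp h)
  have bernoulli := one_add_mul_self_lt_rpow_one_add (by linarith [div_nonneg ht hs.le]) hratio hp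
  rw [add_sub_cancel, Real.div_rpow ht hs.le, lt_div_iff₀ (by positivity)] at bernoulli
  calc s ^ p + p * s ^ (p - 1) * (t - s) = (1 + p * (t / s - 1)) * s ^ p := by
        rw [← rpow_sub_one_mul_self hs.le (by positivity : p ≠ 0)]; field_simp
    _ < t ^ p := bernoulli

lemma rpow_sub_one_mul_le {q ε s b : ℝ} (hq : 1 ≤ q) (hε : 0 < ε) (hs : 0 ≤ s) (hb : 0 ≤ b) :
    s ^ (q - 1) * b ≤ ε * s ^ q + ε ^ (1 - q) * b ^ q := by
  have hq0 : q ≠ 0 := by positivity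
  rw [← rpow_sub_one_mul_self hs hq0, ← rpow_sub_one_mul_self hb hq0]
  rcases le_total b (ε * s) with h | h
  · calc s ^ (q - 1) * b ≤ s ^ (q - 1) * (ε * s) := by gcongr
      _ = ε * (s ^ (q - 1) * s) := by ring
      _ ≤ _ := le_add_of_nonneg_right (by positivity)
  · calc s ^ (q - 1) * b ≤ (b / ε) ^ (q - 1) * b := by
          have : 0 ≤ q - 1 := sub_nonneg.mpr hq
          gcongr
          rwa [le_div_iff₀' hε]
      _ = ε ^ (1 - q) * (b ^ (q - 1) * b) := by
          rw [Real.div_rpow hb hε.le, ← neg_sub q 1, Real.rpow_neg hε.le]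
          ring
      _ ≤ _ := le_add_of_nonneg_left (by positivity)

lemma norm_rpow_le_mul_norm_rpow_add_norm_sub_rpow {E : Type*} [SeminormedAddCommGroup E] {q : ℝ}
    (hq : 1 ≤ q) (x a : E) : ‖x‖ ^ q ≤ 2 ^ (q - 1) * (‖a‖ ^ q + ‖x - a‖ ^ q) :=
  calc ‖x‖ ^ q ≤ (‖a‖ + ‖x - a‖) ^ q := by gcongr; exact norm_le_norm_add_norm_sub' x a
    _ ≤ 2 ^ (q - 1) * (‖a‖ ^ q + ‖x - a‖ ^ q) := by
        exact_mod_cast NNReal.rpow_add_le_mul_rpow_add_rpow ‖a‖₊ ‖x - a‖₊ hq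

lemma rpow_mul_rpow_mul_rpow_rpow_one_div {m D s q p : ℝ} (hm : 0 ≤ m) (hD : 0 ≤ D) (hq : 0 < q)
    (hqp : q ≤ p) (hs : 1 / q ≤ s) :
    m ^ (s - 1 / q) * (m ^ (1 - q / p) * D ^ (q / p)) ^ (1 / q) =
      m ^ (s - 1 / p) * D ^ (1 / p) := by
  have hp : 0 < p := hq.trans_le hqp
  have hexp : (1 - q / p) * (1 / q) = 1 / q - 1 / p := by field_simp
  have hroot : q / p * (1 / q) = 1 / p := by field_simp
  rw [Real.mul_rpow (by positivity) (by positivity), ← Real.rpow_mul hm, ← Real.rpow_mul hD, hexp,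
    hroot, ← mul_assoc, ← Real.rpow_add_of_nonneg hm (sub_nonneg.mpr hs)
      (sub_nonneg.mpr (one_div_le_one_div_of_le hq hqp)), sub_add_sub_cancel]

end Powers

section Bregman

variable {E : Type*} [NormedAddCommGroup E] [InnerProductSpace ℝ E] {p : ℝ}

/-- The Bregman divergence of the convex function `‖·‖ ^ p`: the gap at `x` between the function
and its tangent at `a`, whose gradient there is `p * ‖a‖ ^ (p - 2) • a`. -/
noncomputable def normRpowBregman (p : ℝ) (a x : E) : ℝ :=
  ‖x‖ ^ p - ‖a‖ ^ p - p * ‖a‖ ^ (p - 2) * ⟪a, x - a⟫_ℝ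

@[simp]
lemma normRpowBregman_self (p : ℝ) (a : E) : normRpowBregman p a a = 0 := by
  simp [normRpowBregman]

lemma normRpowBregman_pos (hp : 1 < p) {a x : E} (hxa : x ≠ a) : 0 < normRpowBregman p a x := by
  have hp0 : p ≠ 0 := by positivity
  rw [normRpowBregman]
  rcases eq_or_ne a 0 with rfl | ha
  · have := norm_pos_iff.mpr hxa
    simp only [norm_zero, Real.zero_rpow hp0, inner_zero_left, mul_zero, sub_zero]
    positivity
  have ha' : 0 < ‖a‖ := norm_pos_iff.mpr ha
  have hinner : ⟪a, x - a⟫_ℝ = ⟪a, x⟫_ℝ - ‖a‖ ^ 2 := by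
    rw [inner_sub_right, real_inner_self_eq_norm_sq]
  rcases eq_or_ne ‖x‖ ‖a‖ with hnorm | hnorm
  · have hneg : ⟪a, x - a⟫_ℝ < 0 := by
      have : 0 < ‖x - a‖ ^ 2 := pow_pos (norm_sub_pos_iff.mpr hxa) 2
      rw [norm_sub_sq_real, hnorm, real_inner_comm] at this
      linarith
    rw [hnorm, sub_self, zero_sub, neg_pos]
    exact mul_neg_of_pos_of_neg (by positivity) hneg
  · have hcs : ⟪a, x - a⟫_ℝ ≤ ‖a‖ * (‖x‖ - ‖a‖) := by
      linarith [real_inner_le_norm a x]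
    have htangent := rpow_add_mul_sub_lt_rpow hp ha' (norm_nonneg x) hnorm
    have : p * ‖a‖ ^ (p - 2) * ⟪a, x - a⟫_ℝ ≤ p * ‖a‖ ^ (p - 1) * (‖x‖ - ‖a‖) := by
      rw [← rpow_sub_two_mul_self ha'.le hp.ne', mul_assoc p, mul_assoc p, mul_assoc (_ ^ _)]
      gcongr
    linarith

lemma normRpowBregman_nonneg (hp : 1 < p) (a x : E) : 0 ≤ normRpowBregman p a x := by
  rcases eq_or_ne x a with rfl | h
  · simp
  · exact (normRpowBregman_pos hp h).le

lemma continuous_normRpowBregman (hp : 1 < p) :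
    Continuous fun z : E × E => normRpowBregman p z.1 z.2 := by
  have hpow : ContDiff ℝ 1 fun x : E => ‖x‖ ^ p := contDiff_norm_rpow hp
  have heq : (fun z : E × E => normRpowBregman p z.1 z.2) = fun z =>
      ‖z.2‖ ^ p - ‖z.1‖ ^ p - fderiv ℝ (fun x : E => ‖x‖ ^ p) z.1 (z.2 - z.1) := by
    ext z
    simp [normRpowBregman, fderiv_norm_rpow _ hp]
  have hderiv : Continuous fun z : E × E =>
      fderiv ℝ (fun x : E => ‖x‖ ^ p) z.1 (z.2 - z.1) :=
    ((hpow.continuous_fderiv one_ne_zero).comp continuous_fst).clm_apply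
      (continuous_snd.sub continuous_fst)
  rw [heq]
  exact ((hpow.continuous.comp continuous_snd).sub (hpow.continuous.comp continuous_fst)).sub hderiv

lemma normRpowBregman_smul {t : ℝ} (ht : 0 < t) (a x : E) :
    normRpowBregman p (t • a) (t • x) = t ^ p * normRpowBregman p a x := by
  have htp : t ^ p = t ^ (p - 2) * t ^ 2 := by
    rw [← Real.rpow_add_natCast ht.ne', Nat.cast_ofNat, sub_add_cancel]
  simp only [normRpowBregman, ← smul_sub, norm_smul, Real.norm_of_nonneg ht.le, htp,
    real_inner_smul_left, real_inner_smul_right, Real.mul_rpow ht.le (norm_nonneg _)]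
  ring

/-- By homogeneity it is enough to compare on the compact set where `‖x - a‖ = 1`. -/
lemma exists_mul_norm_sub_rpow_le_normRpowBregman [FiniteDimensional ℝ E] (hp : 1 < p) (D : ℝ) :
    ∃ c > 0, ∀ a x : E, ‖a‖ ≤ D * ‖x - a‖ → c * ‖x - a‖ ^ p ≤ normRpowBregman p a x := by
  let K : Set (E × E) := closedBall 0 D ×ˢ sphere 0 1
  have hK : IsCompact K := (isCompact_closedBall 0 D).prod (isCompact_sphere 0 1)
  have hcont : Continuous fun z : E × E => normRpowBregman p z.1 (z.1 + z.2) :=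
    (continuous_normRpowBregman hp).comp (continuous_fst.prodMk (continuous_fst.add continuous_snd))
  have hpos : ∀ z ∈ K, 0 < normRpowBregman p z.1 (z.1 + z.2) := fun z hz =>
    normRpowBregman_pos hp (by simpa using ne_zero_of_mem_unit_sphere ⟨z.2, hz.2⟩)
  obtain ⟨c, hc, hcK⟩ := hK.exists_forall_le' hcont.continuousOn hpos
  refine ⟨c, hc, fun a x hax => ?_⟩
  rcases eq_or_ne x a with rfl | hne
  · simp [Real.zero_rpow (by positivity : p ≠ 0)]
  have hd : 0 < ‖x - a‖ := norm_sub_pos_iff.mpr hne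
  have hmem : (‖x - a‖⁻¹ • a, ‖x - a‖⁻¹ • (x - a)) ∈ K := by
    constructor
    · rwa [mem_closedBall_zero_iff, norm_smul, norm_inv, norm_norm, inv_mul_le_iff₀' hd]
    · simp [norm_smul, hd.ne']
  have hscaled := hcK _ hmem
  rwa [← smul_add, add_sub_cancel, normRpowBregman_smul (inv_pos.mpr hd), Real.inv_rpow hd.le,
    le_inv_mul_iff₀ (by positivity), mul_comm] at hscaled

lemma exists_norm_sub_rpow_le_add_normRpowBregman [FiniteDimensional ℝ E] (hp : 1 < p) {q ε : ℝ}
    (hq : 0 < q) (hε : 0 < ε) : ∃ C > 0, ∀ a x : E,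
      ‖x - a‖ ^ q ≤ ε * ‖a‖ ^ q + C * normRpowBregman p a x ^ (q / p) := by
  obtain ⟨c, hc, hbregman⟩ :=
    exists_mul_norm_sub_rpow_le_normRpowBregman (E := E) hp (ε ^ (-q⁻¹))
  refine ⟨c⁻¹ ^ (q / p), by positivity, fun a x => ?_⟩
  have hR : 0 ≤ normRpowBregman p a x := normRpowBregman_nonneg hp a x
  rcases le_total ‖a‖ (ε ^ (-q⁻¹) * ‖x - a‖) with hnear | hfar
  · calc ‖x - a‖ ^ q = (‖x - a‖ ^ p) ^ (q / p) := by
          rw [← Real.rpow_mul (norm_nonneg _), mul_div_cancel₀ q (by positivity)]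
      _ ≤ (c⁻¹ * normRpowBregman p a x) ^ (q / p) := by
          gcongr
          rw [le_inv_mul_iff₀ hc]
          exact hbregman a x hnear
      _ = c⁻¹ ^ (q / p) * normRpowBregman p a x ^ (q / p) := Real.mul_rpow (by positivity) hR
      _ ≤ _ := le_add_of_nonneg_left (by positivity)
  · calc ‖x - a‖ ^ q = ε * (ε ^ (-q⁻¹) * ‖x - a‖) ^ q := by
          rw [Real.mul_rpow (by positivity) (norm_nonneg _), ← Real.rpow_mul hε.le,
            neg_mul, inv_mul_cancel₀ hq.ne', Real.rpow_neg_one, mul_inv_cancel_left₀ hε.ne']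
      _ ≤ ε * ‖a‖ ^ q := by gcongr
      _ ≤ _ := le_add_of_nonneg_right (by positivity)

end Bregman

section CompactSupport

variable {E F : Type*} [NormedAddCommGroup E] [NormedAddCommGroup F]

lemma contDiff_of_eventuallyEq_zero [NormedSpace ℝ E] [NormedSpace ℝ F] {f : E → F} {x₀ : E}
    {k : WithTop ℕ∞} (hzero : f =ᶠ[𝓝 x₀] 0) (hf : ∀ x ≠ x₀, ContDiffAt ℝ k f x) :
    ContDiff ℝ k f := by
  refine contDiff_iff_contDiffAt.mpr fun x => ?_
  rcases eq_or_ne x x₀ with rfl | hx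
  · exact contDiffAt_const.congr_of_eventuallyEq hzero
  · exact hf x hx

lemma integrable_norm_rpow_of_hasCompactSupport [MeasurableSpace E] [OpensMeasurableSpace E]
    {μ : Measure E} [IsFiniteMeasureOnCompacts μ] {f : E → F} (hf : Continuous f)
    (hfc : HasCompactSupport f) {s : ℝ} (hs : 0 < s) : Integrable (fun y => ‖f y‖ ^ s) μ :=
  (hf.norm.rpow_const fun _ => Or.inr hs.le).integrable_of_hasCompactSupport <|
    hfc.comp_left (g := fun v => ‖v‖ ^ s) (by simp [hs.ne'])

lemma integrable_fderiv_apply_self [NormedSpace ℝ E] [NormedSpace ℝ F] [MeasurableSpace E]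
    [OpensMeasurableSpace E] {μ : Measure E} [IsFiniteMeasureOnCompacts μ] {g : E → F}
    (hg : ContDiff ℝ 1 g) (hgc : HasCompactSupport g) :
    Integrable (fun y => fderiv ℝ g y y) μ := by
  refine ((hg.continuous_fderiv one_ne_zero).clm_apply
    continuous_id).integrable_of_hasCompactSupport ?_
  exact (hgc.fderiv (𝕜 := ℝ)).mono fun y hy h => hy (by simp [h])

variable [NormedSpace ℝ E] [FiniteDimensional ℝ E] [NormedSpace ℝ F] [MeasurableSpace E]
  [BorelSpace E] {μ : Measure E} [μ.IsAddHaarMeasure]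

lemma integral_smul_fderiv_apply {g : E → F} (hg : ContDiff ℝ 1 g) (hgc : HasCompactSupport g)
    (ℓ : E →L[ℝ] ℝ) (v : E) : ∫ y, ℓ y • fderiv ℝ g y v ∂μ = -ℓ v • ∫ y, g y ∂μ := by
  have := hg.continuous
  have := hg.continuous_fderiv one_ne_zero
  rw [integral_smul_fderiv_eq_neg_fderiv_smul_of_integrable]
  · simp only [ContinuousLinearMap.fderiv, integral_smul, neg_smul]
  · simp only [ContinuousLinearMap.fderiv]
    exact (hg.continuous.integrable_of_hasCompactSupport hgc).smul (ℓ v)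
  · refine Continuous.integrable_of_hasCompactSupport (by fun_prop) ?_
    exact (hgc.fderiv_apply (𝕜 := ℝ) v).smul_left
  · exact Continuous.integrable_of_hasCompactSupport (by fun_prop) hgc.smul_left
  · exact fun y _ => ℓ.differentiableAt
  · exact fun y _ => hg.differentiable one_ne_zero y

lemma integral_fderiv_apply_self {g : E → F} (hg : ContDiff ℝ 1 g) (hgc : HasCompactSupport g) :
    ∫ y, fderiv ℝ g y y ∂μ = -(finrank ℝ E : ℝ) • ∫ y, g y ∂μ := by
  let b := finBasis ℝ E
  let ℓ i : E →L[ℝ] ℝ := LinearMap.toContinuousLinearMap (b.coord i)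
  have hexpand : ∀ y, fderiv ℝ g y y = ∑ i, ℓ i y • fderiv ℝ g y (b i) := fun y => by
    conv_lhs => rw [← b.sum_repr y, map_sum]
    simp [ℓ]
  have := hg.continuous_fderiv one_ne_zero
  have hint : ∀ i, Integrable (fun y => ℓ i y • fderiv ℝ g y (b i)) μ := fun i =>
    Continuous.integrable_of_hasCompactSupport (by fun_prop)
      (hgc.fderiv_apply (𝕜 := ℝ) _).smul_left
  simp_rw [hexpand]
  rw [integral_finsetSum _ fun i _ => hint i]
  simp only [integral_smul_fderiv_apply hg hgc]
  simp [ℓ, Nat.cast_smul_eq_nsmul]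

end CompactSupport

lemma integral_rpow_le_measureReal_rpow_mul {α : Type*} [MeasurableSpace α] {ν : Measure α}
    [IsFiniteMeasure ν] {f : α → ℝ} {θ : ℝ} (hθ0 : 0 < θ) (hθ1 : θ < 1) (hf : Integrable f ν)
    (hf0 : ∀ y, 0 ≤ f y) :
    ∫ y, f y ^ θ ∂ν ≤ ν.real univ ^ (1 - θ) * (∫ y, f y ∂ν) ^ θ := by
  have hconj := Real.holderConjugate_one_div hθ0 (sub_pos.mpr hθ1) (add_sub_cancel θ 1)
  have hmemLp : MemLp (fun y => f y ^ θ) (ENNReal.ofReal (1 / θ)) ν := by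
    have := (memLp_one_iff_integrable.mpr hf).norm_rpow_div (ENNReal.ofReal θ)
    simpa only [ENNReal.toReal_ofReal hθ0.le, Real.norm_of_nonneg (hf0 _),
      ENNReal.ofReal_div_of_pos hθ0, ENNReal.ofReal_one] using this
  have hroot : ∀ y, (f y ^ θ) ^ θ⁻¹ = f y := fun y => Real.rpow_rpow_inv (hf0 y) hθ0.ne'
  have holder := integral_mul_le_Lp_mul_Lq_of_nonneg hconj
    (ae_of_all _ fun y => Real.rpow_nonneg (hf0 y) θ) (ae_of_all _ fun _ => zero_le_one)
    hmemLp (memLp_const 1)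
  rw [mul_comm]
  simpa [hroot] using holder

section Hardy

variable {E : Type*} [NormedAddCommGroup E] {u : E → ℝ} {a p q : ℝ}

/-- The integrand `|u| ^ q / ‖y‖ ^ q` of the Hardy term. -/
noncomputable def hardyDensity (q : ℝ) (u : E → ℝ) (y : E) : ℝ :=
  |u y| ^ q / ‖y‖ ^ q

lemma hardyDensity_eq_rpow_div (q : ℝ) (u : E → ℝ) (y : E) :
    hardyDensity q u y = (|u y| / ‖y‖) ^ q :=
  (Real.div_rpow (abs_nonneg _) (norm_nonneg _) q).symm

lemma hardyDensity_eq_zero (hq : q ≠ 0) {y : E} (hy : u y = 0) : hardyDensity q u y = 0 := by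
  simp [hardyDensity, hy, hq]

lemma hasCompactSupport_hardyDensity (hc : HasCompactSupport u) (hq : q ≠ 0) :
    HasCompactSupport (hardyDensity q u) :=
  hc.mono fun _ hy h => hy (hardyDensity_eq_zero hq h)

variable [InnerProductSpace ℝ E]

/-- The vector field `a * u(y) * y / ‖y‖ ^ 2`, which is the gradient of `u` when `u` is the
radial power `‖y‖ ^ a`; for `a = (p - n) / p` that power is the virtual extremal of the Hardy
inequality. -/
noncomputable def hardyField (a : ℝ) (u : E → ℝ) (y : E) : E :=
  (a * u y / ‖y‖ ^ 2) • y

lemma hardyField_eq_zero {y : E} (hy : u y = 0) : hardyField a u y = 0 := by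
  simp [hardyField, hy]

lemma norm_hardyField (ha : 0 ≤ a) (u : E → ℝ) (y : E) :
    ‖hardyField a u y‖ = a * (|u y| / ‖y‖) := by
  rcases eq_or_ne y 0 with rfl | hy
  · simp [hardyField]
  · have := norm_pos_iff.mpr hy
    simp only [hardyField, norm_smul, norm_div, norm_mul, Real.norm_eq_abs, abs_of_nonneg ha,
      norm_pow, abs_norm]
    field_simp

lemma norm_hardyField_rpow (ha : 0 ≤ a) (q : ℝ) (u : E → ℝ) (y : E) :
    ‖hardyField a u y‖ ^ q = a ^ q * hardyDensity q u y := by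
  rw [norm_hardyField ha, Real.mul_rpow ha (by positivity), hardyDensity_eq_rpow_div]

lemma contDiff_hardyDensity (hu : ContDiff ℝ 1 u) (h0 : 0 ∉ tsupport u) (hq : 1 < q) :
    ContDiff ℝ 1 (hardyDensity q u) := by
  refine contDiff_of_eventuallyEq_zero (x₀ := 0) ?_ fun y hy => ?_
  · filter_upwards [notMem_tsupport_iff_eventuallyEq.mp h0] with y hy
    exact hardyDensity_eq_zero (by positivity) hy
  · have hnum : ContDiff ℝ 1 fun y => |u y| ^ q := by simpa using hu.norm_rpow hq
    exact hnum.contDiffAt.div (contDiff_norm_rpow hq).contDiffAt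
      (Real.rpow_pos_of_pos (norm_pos_iff.mpr hy) q).ne'

lemma continuous_hardyField (hu : ContDiff ℝ 1 u) (h0 : 0 ∉ tsupport u) :
    Continuous (hardyField a u) := by
  refine (contDiff_of_eventuallyEq_zero (x₀ := 0) (k := 1) ?_ fun y hy => ?_).continuous
  · filter_upwards [notMem_tsupport_iff_eventuallyEq.mp h0] with y hy
    exact hardyField_eq_zero hy
  · exact ((contDiff_const.mul hu).contDiffAt.div (contDiff_norm_sq ℝ).contDiffAt
      (pow_ne_zero 2 (norm_ne_zero_iff.mpr hy))).smul contDiffAt_id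

lemma hasCompactSupport_hardyField (hc : HasCompactSupport u) :
    HasCompactSupport (hardyField a u) :=
  hc.mono fun _ hy h => hy (hardyField_eq_zero h)

lemma fderiv_hardyDensity_apply_self (hu : Differentiable ℝ u) (hq : 1 < q) (y : E) :
    fderiv ℝ (hardyDensity q u) y y =
      q * |u y| ^ (q - 2) * u y * fderiv ℝ u y y / ‖y‖ ^ q - q * hardyDensity q u y := by
  rcases eq_or_ne y 0 with rfl | hy
  · simp [hardyDensity, (by positivity : q ≠ 0)]
  have hy' : 0 < ‖y‖ := norm_pos_iff.mpr hy
  have hnum := (hasDerivAt_abs_rpow (u y) hq).comp_hasFDerivAt y (hu y).hasFDerivAt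
  have hden := (hasDerivAt_inv (Real.rpow_pos_of_pos hy' q).ne').comp_hasFDerivAt y
    (hasFDerivAt_norm_rpow y hq)
  have heq : hardyDensity q u = ((|·| ^ q) ∘ u) * (Inv.inv ∘ (‖·‖ ^ q)) := by
    ext z
    simp [hardyDensity, div_eq_mul_inv]
  have hfderiv := (hnum.mul hden).fderiv
  rw [← heq] at hfderiv
  rw [hfderiv]
  simp only [hardyDensity, Function.comp_apply, add_apply, smul_apply,
    innerSL_apply_apply, real_inner_self_eq_norm_sq, smul_eq_mul]
  rw [mul_assoc q (‖y‖ ^ (q - 2)), rpow_sub_two_mul_sq hy'.le (by positivity)]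
  field_simp
  ring

variable [CompleteSpace E]

lemma norm_gradient (u : E → ℝ) (y : E) : ‖∇ u y‖ = ‖fderiv ℝ u y‖ := by
  simp [gradient]

lemma continuous_gradient (hu : ContDiff ℝ 1 u) : Continuous (∇ u) :=
  (InnerProductSpace.toDual ℝ E).symm.continuous.comp (hu.continuous_fderiv one_ne_zero)

lemma hasCompactSupport_gradient (hc : HasCompactSupport u) : HasCompactSupport (∇ u) :=
  (hc.fderiv (𝕜 := ℝ)).comp_left (map_zero (InnerProductSpace.toDual ℝ E).symm)

lemma normRpowBregman_hardyField_gradient (hu : Differentiable ℝ u) (hp : 1 < p) (ha : 0 ≤ a)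
    (y : E) : normRpowBregman p (hardyField a u y) (∇ u y) =
      ‖∇ u y‖ ^ p + (p - 1) * a ^ p * hardyDensity p u y
        - a ^ (p - 1) * (fderiv ℝ (hardyDensity p u) y y + p * hardyDensity p u y) := by
  have hp0 : p ≠ 0 := by positivity
  have hcross : ‖hardyField a u y‖ ^ (p - 2) * ⟪hardyField a u y, ∇ u y⟫_ℝ =
      a ^ (p - 1) * (|u y| ^ (p - 2) * u y * fderiv ℝ u y y / ‖y‖ ^ p) := by
    rw [norm_hardyField_rpow ha, real_inner_comm, hardyField, real_inner_smul_right,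
      inner_gradient_left, hardyDensity, ← rpow_sub_two_mul_self ha hp.ne',
      ← rpow_sub_two_mul_sq (norm_nonneg y) hp0]
    ring
  have hself : ‖hardyField a u y‖ ^ (p - 2) * ‖hardyField a u y‖ ^ 2 =
      a ^ p * hardyDensity p u y := by
    rw [rpow_sub_two_mul_sq (norm_nonneg _) hp0, norm_hardyField_rpow ha]
  rw [normRpowBregman, norm_hardyField_rpow ha p, inner_sub_right, real_inner_self_eq_norm_sq,
    fderiv_hardyDensity_apply_self hu hp]
  linear_combination -p * hcross + p * hself

lemma mul_hardyDensity_sub_le_fderiv_apply_self (hu : Differentiable ℝ u) (hq : 1 < q) (a : ℝ)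
    (y : E) : (q * a - q) * hardyDensity q u y
        - q * ((|u y| / ‖y‖) ^ (q - 1) * ‖∇ u y - hardyField a u y‖) ≤
      fderiv ℝ (hardyDensity q u) y y := by
  have hq0 : q ≠ 0 := by positivity
  rcases eq_or_ne y 0 with rfl | hy
  · simp [hardyDensity, hq0, (sub_pos.mpr hq).ne']
  have hy' : 0 < ‖y‖ := norm_pos_iff.mpr hy
  set w := ∇ u y - hardyField a u y
  have hradial : fderiv ℝ u y y = ⟪w, y⟫_ℝ + a * u y := by
    rw [inner_sub_left, inner_gradient_left, hardyField, real_inner_smul_left,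
      real_inner_self_eq_norm_sq]
    field_simp
    ring
  have hcs : -(|u y| * (‖w‖ * ‖y‖)) ≤ u y * ⟪w, y⟫_ℝ := by
    refine (abs_le.mp ?_).1
    rw [abs_mul]
    gcongr
    exact abs_real_inner_le_norm w y
  calc (q * a - q) * hardyDensity q u y - q * ((|u y| / ‖y‖) ^ (q - 1) * ‖w‖)
      = q * (|u y| ^ (q - 2) / ‖y‖ ^ q) * -(|u y| * (‖w‖ * ‖y‖))
          + (q * a - q) * hardyDensity q u y := by
        rw [Real.div_rpow (abs_nonneg _) hy'.le, ← rpow_sub_two_mul_self (abs_nonneg _) hq.ne',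
          ← rpow_sub_one_mul_self hy'.le hq0]
        field_simp
        ring
    _ ≤ q * (|u y| ^ (q - 2) / ‖y‖ ^ q) * (u y * ⟪w, y⟫_ℝ)
          + (q * a - q) * hardyDensity q u y := by gcongr
    _ = fderiv ℝ (hardyDensity q u) y y := by
        rw [fderiv_hardyDensity_apply_self hu hq, hradial, hardyDensity,
          ← rpow_sub_two_mul_sq (abs_nonneg (u y)) hq0, sq_abs]
        ring

end Hardy

section HardyDeficit

variable {E : Type*} [NormedAddCommGroup E] [MeasurableSpace E]
  {μ : Measure E} {u : E → ℝ} {a p q : ℝ}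

/-- The Hardy difference `∫ |∇u| ^ p - ((p - n) / p) ^ p * ∫ |u| ^ p / |y| ^ p` over the whole
space, where `n = finrank ℝ E`. -/
noncomputable def hardyDeficit [NormedSpace ℝ E] (μ : Measure E) (p : ℝ) (u : E → ℝ) : ℝ :=
  ∫ y, ‖fderiv ℝ u y‖ ^ p ∂μ
    - ((p - finrank ℝ E) / p) ^ p * ∫ y, hardyDensity p u y ∂μ

section Integrable

variable [InnerProductSpace ℝ E] [OpensMeasurableSpace E] [IsFiniteMeasureOnCompacts μ]

lemma integrable_hardyDensity (hu : ContDiff ℝ 1 u) (hc : HasCompactSupport u)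
    (h0 : 0 ∉ tsupport u) (hq : 1 < q) : Integrable (hardyDensity q u) μ :=
  (contDiff_hardyDensity hu h0 hq).continuous.integrable_of_hasCompactSupport
    (hasCompactSupport_hardyDensity hc (by positivity))

variable [CompleteSpace E]

lemma integrable_norm_gradient_rpow (hu : ContDiff ℝ 1 u) (hc : HasCompactSupport u) (hq : 0 < q) :
    Integrable (fun y => ‖∇ u y‖ ^ q) μ :=
  integrable_norm_rpow_of_hasCompactSupport (continuous_gradient hu)
    (hasCompactSupport_gradient hc) hq

lemma integrable_norm_gradient_sub_hardyField_rpow (hu : ContDiff ℝ 1 u) (hc : HasCompactSupport u)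
    (h0 : 0 ∉ tsupport u) (hq : 0 < q) :
    Integrable (fun y => ‖∇ u y - hardyField a u y‖ ^ q) μ :=
  integrable_norm_rpow_of_hasCompactSupport
    ((continuous_gradient hu).sub (continuous_hardyField hu h0))
    ((hasCompactSupport_gradient hc).sub (hasCompactSupport_hardyField hc)) hq

lemma integrable_normRpowBregman_rpow (hu : ContDiff ℝ 1 u) (hc : HasCompactSupport u)
    (h0 : 0 ∉ tsupport u) (hp : 1 < p) {θ : ℝ} (hθ : 0 < θ) :
    Integrable (fun y => normRpowBregman p (hardyField a u y) (∇ u y) ^ θ) μ := by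
  have hcont : Continuous fun y => normRpowBregman p (hardyField a u y) (∇ u y) :=
    (continuous_normRpowBregman hp).comp
      ((continuous_hardyField hu h0).prodMk (continuous_gradient hu))
  exact (hcont.rpow_const fun _ => Or.inr hθ.le).integrable_of_hasCompactSupport <|
    (hasCompactSupport_hardyField hc).comp₂_left (hasCompactSupport_gradient hc)
      (m := fun a x => normRpowBregman p a x ^ θ) (by simp [hθ.ne'])

lemma integral_norm_gradient_rpow_le (hu : ContDiff ℝ 1 u) (hc : HasCompactSupport u)
    (h0 : 0 ∉ tsupport u) (hq : 1 ≤ q) :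
    ∫ y, ‖∇ u y‖ ^ q ∂μ ≤ 2 ^ (q - 1) *
      (∫ y, ‖hardyField a u y‖ ^ q ∂μ + ∫ y, ‖∇ u y - hardyField a u y‖ ^ q ∂μ) := by
  have hq0 : 0 < q := by positivity
  have hfield : Integrable (fun y => ‖hardyField a u y‖ ^ q) μ :=
    integrable_norm_rpow_of_hasCompactSupport (continuous_hardyField hu h0)
      (hasCompactSupport_hardyField hc) hq0
  have hdefect := integrable_norm_gradient_sub_hardyField_rpow (μ := μ) (a := a) hu hc h0 hq0
  rw [← integral_add hfield hdefect, ← integral_const_mul]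
  exact integral_mono (integrable_norm_gradient_rpow hu hc hq0)
    ((hfield.add hdefect).const_mul _) fun y =>
      norm_rpow_le_mul_norm_rpow_add_norm_sub_rpow hq (∇ u y) (hardyField a u y)

lemma integral_normRpowBregman_rpow_le (hu : ContDiff ℝ 1 u) (hc : HasCompactSupport u) {Ω : Set E}
    (hΩ : μ Ω ≠ ⊤) (hsub : tsupport u ⊆ Ω \ {0}) (hp : 1 < p) {θ : ℝ} (hθ0 : 0 < θ) (hθ1 : θ < 1) :
    ∫ y, normRpowBregman p (hardyField a u y) (∇ u y) ^ θ ∂μ ≤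
      μ.real Ω ^ (1 - θ) * (∫ y, normRpowBregman p (hardyField a u y) (∇ u y) ∂μ) ^ θ := by
  set R := fun y => normRpowBregman p (hardyField a u y) (∇ u y)
  have hint : Integrable R μ := by
    simpa using integrable_normRpowBregman_rpow hu hc (fun h => (hsub h).2 rfl) hp one_pos
  have hoff : ∀ y ∉ Ω, R y = 0 := fun y hy => by
    have hgrad : ∇ u y = 0 := by
      simp [gradient, fderiv_of_notMem_tsupport ℝ fun h => hy (hsub h).1]
    have hzero : u y = 0 := image_eq_zero_of_notMem_tsupport fun h => hy (hsub h).1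
    simp [R, hgrad, hardyField_eq_zero hzero]
  have : IsFiniteMeasure (μ.restrict Ω) := isFiniteMeasure_restrict.mpr hΩ
  have holder := integral_rpow_le_measureReal_rpow_mul hθ0 hθ1 (hint.restrict (s := Ω))
    fun y => normRpowBregman_nonneg hp _ _
  rwa [setIntegral_eq_integral_of_forall_compl_eq_zero hoff,
    setIntegral_eq_integral_of_forall_compl_eq_zero fun y hy => by
      rw [hoff y hy, Real.zero_rpow hθ0.ne'],
    measureReal_restrict_apply_univ] at holder

end Integrable

variable [InnerProductSpace ℝ E] [FiniteDimensional ℝ E]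

lemma exists_integral_norm_gradient_sub_hardyField_rpow_le (hp : 1 < p) (hq : 0 < q) {ε : ℝ}
    (hε : 0 < ε) (a : ℝ) (μ : Measure E)
    [OpensMeasurableSpace E] [IsFiniteMeasureOnCompacts μ] :
    ∃ C > 0, ∀ u : E → ℝ, ContDiff ℝ 1 u → HasCompactSupport u → 0 ∉ tsupport u →
      ∫ y, ‖∇ u y - hardyField a u y‖ ^ q ∂μ ≤ ε * ∫ y, ‖hardyField a u y‖ ^ q ∂μ +
        C * ∫ y, normRpowBregman p (hardyField a u y) (∇ u y) ^ (q / p) ∂μ := by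
  obtain ⟨C, hC, hbregman⟩ := exists_norm_sub_rpow_le_add_normRpowBregman (E := E) hp hq hε
  refine ⟨C, hC, fun u hu hc h0 => ?_⟩
  have hfield : Integrable (fun y => ‖hardyField a u y‖ ^ q) μ :=
    integrable_norm_rpow_of_hasCompactSupport (continuous_hardyField hu h0)
      (hasCompactSupport_hardyField hc) hq
  have hremainder := integrable_normRpowBregman_rpow (μ := μ) (a := a) hu hc h0 hp
    (by positivity : 0 < q / p)
  rw [← integral_const_mul, ← integral_const_mul,
    ← integral_add (hfield.const_mul _) (hremainder.const_mul _)]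
  exact integral_mono (integrable_norm_gradient_sub_hardyField_rpow hu hc h0 hq)
    ((hfield.const_mul _).add (hremainder.const_mul _)) fun y => hbregman _ _

variable [BorelSpace E] [μ.IsAddHaarMeasure]

lemma integral_normRpowBregman_eq_hardyDeficit (hu : ContDiff ℝ 1 u) (hc : HasCompactSupport u)
    (h0 : 0 ∉ tsupport u) (hp : 1 < p) (hnp : finrank ℝ E ≤ p) :
    ∫ y, normRpowBregman p (hardyField ((p - finrank ℝ E) / p) u y) (∇ u y) ∂μ =
      hardyDeficit μ p u := by
  have hp0 : 0 < p := by positivity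
  set a := (p - finrank ℝ E) / p with ha_def
  have ha : 0 ≤ a := div_nonneg (sub_nonneg.mpr hnp) hp0.le
  have hpa : p - finrank ℝ E = a * p := (div_mul_cancel₀ _ hp0.ne').symm
  have hgrad := integrable_norm_gradient_rpow (μ := μ) hu hc hp0
  have hdens := integrable_hardyDensity (μ := μ) hu hc h0 hp
  have hradial : Integrable (fun y => fderiv ℝ (hardyDensity p u) y y) μ :=
    integrable_fderiv_apply_self (contDiff_hardyDensity hu h0 hp)
      (hasCompactSupport_hardyDensity hc hp0.ne')
  simp_rw [normRpowBregman_hardyField_gradient (hu.differentiable one_ne_zero) hp ha]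
  rw [integral_sub (hgrad.fun_add (hdens.const_mul _))
      ((hradial.fun_add (hdens.const_mul _)).const_mul _),
    integral_add hgrad (hdens.const_mul _), integral_const_mul, integral_const_mul,
    integral_add hradial (hdens.const_mul _), integral_const_mul,
    integral_fderiv_apply_self (contDiff_hardyDensity hu h0 hp)
      (hasCompactSupport_hardyDensity hc hp0.ne')]
  simp only [hardyDeficit, norm_gradient, smul_eq_mul, ← ha_def]
  rw [← rpow_sub_one_mul_self ha hp0.ne']
  linear_combination -(a ^ (p - 1) * ∫ y, hardyDensity p u y ∂μ) * hpa

lemma hardyDeficit_nonneg (hu : ContDiff ℝ 1 u) (hc : HasCompactSupport u)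
    (h0 : 0 ∉ tsupport u) (hp : 1 < p) (hnp : finrank ℝ E ≤ p) : 0 ≤ hardyDeficit μ p u := by
  rw [← integral_normRpowBregman_eq_hardyDeficit hu hc h0 hp hnp]
  exact integral_nonneg fun y => normRpowBregman_nonneg hp _ _

/-- Positivity of `q * a - q + n` means `a > (q - n) / q`. No such bound holds at equality: there
`∇u = hardyField a u` for the virtual extremal `u = ‖y‖ ^ a` of the `q`-Hardy inequality. -/
lemma integral_hardyDensity_le (hu : ContDiff ℝ 1 u) (hc : HasCompactSupport u)
    (h0 : 0 ∉ tsupport u) (hq : 1 < q) (ha : 0 < q * a - q + finrank ℝ E) :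
    ∫ y, hardyDensity q u y ∂μ ≤ (2 * q / (q * a - q + finrank ℝ E)) ^ q *
      ∫ y, ‖∇ u y - hardyField a u y‖ ^ q ∂μ := by
  have hq0 : 0 < q := by positivity
  set κ := q * a - q + finrank ℝ E with hκ
  set ε := κ / (2 * q)
  have hε : 0 < ε := by positivity
  have hqε : q * ε = κ / 2 := by simp only [ε]; field_simp
  have hpointwise : ∀ y, (q * a - q - q * ε) * hardyDensity q u y
      - q * ε ^ (1 - q) * ‖∇ u y - hardyField a u y‖ ^ q ≤ fderiv ℝ (hardyDensity q u) y y := by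
    intro y
    refine le_trans ?_
      (mul_hardyDensity_sub_le_fderiv_apply_self (hu.differentiable one_ne_zero) hq a y)
    have young := rpow_sub_one_mul_le hq.le hε (by positivity : 0 ≤ |u y| / ‖y‖)
      (norm_nonneg (∇ u y - hardyField a u y))
    rw [← hardyDensity_eq_rpow_div q] at young
    linarith [mul_le_mul_of_nonneg_left young hq0.le]
  have hdens := integrable_hardyDensity (μ := μ) hu hc h0 hq
  have hdefect := integrable_norm_gradient_sub_hardyField_rpow (μ := μ) (a := a) hu hc h0 hq0
  have hD := contDiff_hardyDensity hu h0 hq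
  have hDc := hasCompactSupport_hardyDensity hc hq0.ne'
  have hint := integral_mono ((hdens.const_mul _).sub (hdefect.const_mul _))
    (integrable_fderiv_apply_self (μ := μ) hD hDc) hpointwise
  rw [integral_sub' (hdens.const_mul _) (hdefect.const_mul _), integral_const_mul,
    integral_const_mul, integral_fderiv_apply_self hD hDc, smul_eq_mul, hqε] at hint
  have hκ_half : κ / 2 * ∫ y, hardyDensity q u y ∂μ ≤
      q * ε ^ (1 - q) * ∫ y, ‖∇ u y - hardyField a u y‖ ^ q ∂μ := by
    linear_combination hint + (∫ y, hardyDensity q u y ∂μ) * hκ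
  rw [← le_div_iff₀' (by positivity)] at hκ_half
  refine hκ_half.trans_eq ?_
  have hconst : (2 * q / κ) ^ q = q * ε ^ (1 - q) / (κ / 2) := by
    rw [← inv_div, Real.inv_rpow hε.le, Real.rpow_sub hε, Real.rpow_one, ← hqε]
    field_simp
  rw [hconst]
  ring

lemma exists_integral_norm_gradient_rpow_le (hp : 1 < p) (hq : 1 < q) (ha : 0 ≤ a)
    (haq : 0 < q * a - q + finrank ℝ E) (μ : Measure E) [μ.IsAddHaarMeasure] :
    ∃ C > 0, ∀ u : E → ℝ, ContDiff ℝ 1 u → HasCompactSupport u → 0 ∉ tsupport u →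
      ∫ y, ‖∇ u y‖ ^ q ∂μ ≤
        C * ∫ y, normRpowBregman p (hardyField a u y) (∇ u y) ^ (q / p) ∂μ := by
  set K := a ^ q * (2 * q / (q * a - q + finrank ℝ E)) ^ q
  have : 0 ≤ K := by positivity
  obtain ⟨C, hC, hbregman⟩ := exists_integral_norm_gradient_sub_hardyField_rpow_le hp
    (by positivity : 0 < q) (by positivity : 0 < 1 / (2 * (K + 1))) a μ
  refine ⟨2 ^ (q - 1) * (K + 1) * (2 * C), by positivity, fun u hu hc h0 => ?_⟩
  set W := ∫ y, ‖∇ u y - hardyField a u y‖ ^ q ∂μ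
  set R := ∫ y, normRpowBregman p (hardyField a u y) (∇ u y) ^ (q / p) ∂μ
  have hW : 0 ≤ W := integral_nonneg fun y => by positivity
  have hfield : ∫ y, ‖hardyField a u y‖ ^ q ∂μ ≤ K * W := by
    simp_rw [norm_hardyField_rpow ha, integral_const_mul, K, mul_assoc]
    gcongr
    exact integral_hardyDensity_le hu hc h0 hq haq
  have habsorb : W ≤ 2 * C * R := by
    have hhalf : 1 / (2 * (K + 1)) * (K * W) ≤ W / 2 := by
      rw [div_mul_eq_mul_div, one_mul, div_le_div_iff₀ (by positivity) two_pos]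
      linarith
    have hWle : W ≤ 1 / (2 * (K + 1)) * (K * W) + C * R :=
      (hbregman u hu hc h0).trans (by gcongr)
    linarith
  calc ∫ y, ‖∇ u y‖ ^ q ∂μ ≤ 2 ^ (q - 1) * (∫ y, ‖hardyField a u y‖ ^ q ∂μ + W) :=
        integral_norm_gradient_rpow_le hu hc h0 hq.le
    _ ≤ 2 ^ (q - 1) * (K * W + W) := by gcongr
    _ = 2 ^ (q - 1) * (K + 1) * W := by ring
    _ ≤ 2 ^ (q - 1) * (K + 1) * (2 * C * R) := by gcongr
    _ = 2 ^ (q - 1) * (K + 1) * (2 * C) * R := by ring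

lemma exists_integral_norm_fderiv_rpow_le_hardyDeficit (μ : Measure E) [μ.IsAddHaarMeasure]
    (hn : 0 < finrank ℝ E) (hnq : finrank ℝ E < q) (hqp : q < p) :
    ∃ C > 0, ∀ Ω : Set E, μ Ω ≠ ⊤ → ∀ u : E → ℝ, ContDiff ℝ 1 u → HasCompactSupport u →
      tsupport u ⊆ Ω \ {0} →
        ∫ y, ‖fderiv ℝ u y‖ ^ q ∂μ ≤
          C * (μ.real Ω ^ (1 - q / p) * hardyDeficit μ p u ^ (q / p)) := by
  have hn1 : (1 : ℝ) ≤ finrank ℝ E := by exact_mod_cast hn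
  have hq : 1 < q := hn1.trans_lt hnq
  have hp : 1 < p := hq.trans hqp
  set a := (p - finrank ℝ E) / p
  have ha : 0 ≤ a := div_nonneg (by linarith) (by positivity)
  have haq : 0 < q * a - q + finrank ℝ E := by
    have : q * a - q + finrank ℝ E = finrank ℝ E * (p - q) / p := by
      simp only [a]; field_simp; ring
    rw [this]
    have := sub_pos.mpr hqp
    positivity
  obtain ⟨C, hC, hgrad⟩ := exists_integral_norm_gradient_rpow_le hp hq ha haq μ
  refine ⟨C, hC, fun Ω hΩ u hu hc hsub => ?_⟩
  have h0 : 0 ∉ tsupport u := fun h => (hsub h).2 rfl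
  have holder := integral_normRpowBregman_rpow_le (a := a) hu hc hΩ hsub hp
    (by positivity : 0 < q / p) ((div_lt_one (by positivity)).mpr hqp)
  rw [integral_normRpowBregman_eq_hardyDeficit hu hc h0 hp (hnq.trans hqp).le] at holder
  simpa only [norm_gradient] using (hgrad u hu hc h0).trans (by gcongr)

end HardyDeficit

section Morrey

lemma lintegral_Icc_rpow_neg {s : ℝ} (hs : s < 1) :
    ∫⁻ t in Icc (0 : ℝ) 1, ENNReal.ofReal (t ^ (-s)) = ENNReal.ofReal (1 - s)⁻¹ := by
  have hint := intervalIntegral.intervalIntegrable_rpow' (a := 0) (b := 1) (neg_lt_neg hs)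
  rw [intervalIntegrable_iff_integrableOn_Ioc_of_le zero_le_one] at hint
  rw [← restrict_Ioc_eq_restrict_Icc, ← ofReal_integral_eq_lintegral_ofReal hint,
    ← intervalIntegral.integral_of_le zero_le_one, integral_rpow (Or.inl (neg_lt_neg hs)),
    Real.one_rpow, Real.zero_rpow (by linarith)]
  · ring_nf
  · filter_upwards [ae_restrict_mem measurableSet_Ioc] with t ht
    exact Real.rpow_nonneg ht.1.le _

variable {E F : Type*} [NormedAddCommGroup E] [NormedSpace ℝ E] [NormedAddCommGroup F]

lemma enorm_sub_le_lintegral_enorm_fderiv [NormedSpace ℝ F] {u : E → F} (hu : ContDiff ℝ 1 u)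
    (x y : E) :
    ‖u (x + y) - u x‖ₑ ≤ ‖y‖ₑ * ∫⁻ t in Icc (0 : ℝ) 1, ‖fderiv ℝ u (x + t • y)‖ₑ := by
  have hderiv : ∀ t : ℝ, deriv (fun t : ℝ => u (x + t • y)) t = fderiv ℝ u (x + t • y) y :=
    fun t => by
      have hline : HasDerivAt (fun t : ℝ => x + t • y) y t := by
        simpa using ((hasDerivAt_id t).smul_const y).const_add x
      exact ((hu.differentiable one_ne_zero _).hasFDerivAt.comp_hasDerivAt t hline).deriv
  have hline : ContDiff ℝ 1 fun t : ℝ => u (x + t • y) := by fun_prop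
  calc ‖u (x + y) - u x‖ₑ = ‖u (x + (1 : ℝ) • y) - u (x + (0 : ℝ) • y)‖ₑ := by simp
    _ ≤ ∫⁻ t in Icc (0 : ℝ) 1, ‖fderiv ℝ u (x + t • y) y‖ₑ := by
        simpa only [hderiv] using
          enorm_sub_le_lintegral_deriv_of_contDiffOn_Icc hline.contDiffOn zero_le_one
    _ ≤ ∫⁻ t in Icc (0 : ℝ) 1, ‖y‖ₑ * ‖fderiv ℝ u (x + t • y)‖ₑ := by
        gcongr with t
        rw [mul_comm]
        exact ContinuousLinearMap.le_opENorm _ _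
    _ = _ := lintegral_const_mul' _ _ enorm_ne_top

variable [FiniteDimensional ℝ E] [MeasurableSpace E] [BorelSpace E] {μ : Measure E}
  [μ.IsAddHaarMeasure]

lemma lintegral_comp_add_smul {f : E → ENNReal} (hf : Measurable f) (x : E) {t : ℝ} (ht : t ≠ 0) :
    ∫⁻ y, f (x + t • y) ∂μ = ENNReal.ofReal |(t ^ finrank ℝ E)⁻¹| * ∫⁻ y, f y ∂μ := by
  rw [← lintegral_map (f := fun z => f (x + z)) (g := (t • ·)) (by fun_prop) (by fun_prop),
    Measure.map_addHaar_smul _ ht, lintegral_smul_measure, lintegral_add_left_eq_self f x,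
    smul_eq_mul]

lemma lintegral_ball_enorm_comp_add_smul_le {f : E → F} (hf : Continuous f) {q : ℝ} (hq : 1 ≤ q)
    (x : E) (r : ℝ) {t : ℝ} (ht : 0 < t) :
    ∫⁻ y in ball 0 r, ‖f (x + t • y)‖ₑ ∂μ ≤
      ENNReal.ofReal (t ^ (-(finrank ℝ E / q))) *
        (eLpNorm' f q μ * μ (ball 0 r) ^ (1 - 1 / q)) := by
  have hq0 : 0 < q := by positivity
  have hscale : eLpNorm' (fun y => f (x + t • y)) q μ =
      ENNReal.ofReal (t ^ (-(finrank ℝ E / q))) * eLpNorm' f q μ := by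
    rw [eLpNorm', eLpNorm', lintegral_comp_add_smul (f := fun y => ‖f y‖ₑ ^ q)
      (hf.enorm.measurable.pow_const q) x ht.ne', ENNReal.mul_rpow_of_nonneg _ _ (by positivity),
      abs_of_pos (by positivity), ENNReal.ofReal_rpow_of_pos (by positivity),
      ← Real.rpow_natCast, ← Real.rpow_neg ht.le, ← Real.rpow_mul ht.le]
    ring_nf
  have hcomp : Continuous fun y => f (x + t • y) := by fun_prop
  have holder := eLpNorm'_le_eLpNorm'_mul_rpow_measure_univ one_pos hq
    (hcomp.aestronglyMeasurable (μ := μ.restrict (ball 0 r)))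
  simp only [eLpNorm'_eq_lintegral_enorm, ENNReal.rpow_one, div_one,
    Measure.restrict_apply_univ] at holder
  refine holder.trans ?_
  rw [← mul_assoc, ← hscale]
  gcongr
  exact eLpNorm'_mono_measure _ Measure.restrict_le_self hq0.le

variable [NormedSpace ℝ F]

lemma measure_mul_enorm_le {u : E → F} (hu : ContDiff ℝ 1 u) {q : ℝ} (hq : 1 ≤ q)
    (hnq : finrank ℝ E < q) (x : E) {r : ℝ} {Z : Set E} (hZ : Z ⊆ ball 0 r)
    (hZu : ∀ y ∈ Z, u (x + y) = 0) :
    μ Z * ‖u x‖ₑ ≤ ENNReal.ofReal r * (ENNReal.ofReal (1 - finrank ℝ E / q)⁻¹ *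
      (eLpNorm' (fderiv ℝ u) q μ * μ (ball 0 r) ^ (1 - 1 / q))) := by
  have hD := hu.continuous_fderiv one_ne_zero
  have hcont : Continuous fun z : E × ℝ => ‖fderiv ℝ u (x + z.2 • z.1)‖ₑ := by fun_prop
  have hray : ∀ y ∈ Z, ‖u x‖ₑ ≤
      ENNReal.ofReal r * ∫⁻ t in Icc (0 : ℝ) 1, ‖fderiv ℝ u (x + t • y)‖ₑ := fun y hy => by
    have hyr : ‖y‖ₑ ≤ ENNReal.ofReal r := by
      rw [← ofReal_norm]
      exact ENNReal.ofReal_le_ofReal (mem_ball_zero_iff.mp (hZ hy)).le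
    have hincr := enorm_sub_le_lintegral_enorm_fderiv hu x y
    rw [hZu y hy, zero_sub, enorm_neg] at hincr
    exact hincr.trans (by gcongr)
  calc μ Z * ‖u x‖ₑ = ∫⁻ _ in Z, ‖u x‖ₑ ∂μ := by rw [setLIntegral_const, mul_comm]
    _ ≤ ∫⁻ y in Z, (ENNReal.ofReal r *
          ∫⁻ t in Icc (0 : ℝ) 1, ‖fderiv ℝ u (x + t • y)‖ₑ) ∂μ :=
        setLIntegral_mono (hcont.measurable.lintegral_prod_right'.const_mul _) hray
    _ ≤ ∫⁻ y in ball 0 r, (ENNReal.ofReal r *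
          ∫⁻ t in Icc (0 : ℝ) 1, ‖fderiv ℝ u (x + t • y)‖ₑ) ∂μ := lintegral_mono_set hZ
    _ = ENNReal.ofReal r *
          ∫⁻ t in Icc (0 : ℝ) 1, ∫⁻ y in ball 0 r, ‖fderiv ℝ u (x + t • y)‖ₑ ∂μ := by
        rw [lintegral_const_mul' _ _ ENNReal.ofReal_ne_top,
          lintegral_lintegral_swap hcont.aemeasurable]
    _ ≤ ENNReal.ofReal r * ∫⁻ t in Icc (0 : ℝ) 1, ENNReal.ofReal (t ^ (-(finrank ℝ E / q))) *
          (eLpNorm' (fderiv ℝ u) q μ * μ (ball 0 r) ^ (1 - 1 / q)) := by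
        rw [← restrict_Ioc_eq_restrict_Icc]
        gcongr ENNReal.ofReal r * ?_
        exact setLIntegral_mono' measurableSet_Ioc fun t ht =>
          lintegral_ball_enorm_comp_add_smul_le hD hq x r ht.1
    _ = _ := by
        rw [lintegral_mul_const _ (by fun_prop),
          lintegral_Icc_rpow_neg ((div_lt_one (by positivity)).mpr hnq)]

lemma exists_ofReal_eq_and_measure_ball_eq [Nontrivial E] (μ : Measure E) [μ.IsAddHaarMeasure]
    {m : ENNReal} (hm : m ≠ ⊤) : ∃ r : ℝ,
      ENNReal.ofReal r = (m / μ (ball 0 1)) ^ (1 / finrank ℝ E : ℝ) ∧ μ (ball 0 r) = m := by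
  have hω : μ (ball (0 : E) 1) ≠ 0 := (measure_ball_pos μ 0 one_pos).ne'
  have hω' : μ (ball (0 : E) 1) ≠ ⊤ := measure_ball_lt_top.ne
  have hr : (m / μ (ball 0 1)) ^ (1 / finrank ℝ E : ℝ) ≠ ⊤ :=
    ENNReal.rpow_ne_top_of_nonneg (by positivity) (ENNReal.div_ne_top hm hω)
  refine ⟨_, ENNReal.ofReal_toReal hr, ?_⟩
  rw [Measure.addHaar_ball μ 0 ENNReal.toReal_nonneg, ENNReal.ofReal_pow ENNReal.toReal_nonneg,
    ENNReal.ofReal_toReal hr, ← ENNReal.rpow_natCast, ← ENNReal.rpow_mul, one_div,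
    inv_mul_cancel₀ (by exact_mod_cast finrank_pos.ne'), ENNReal.rpow_one,
    ENNReal.div_mul_cancel hω hω']

theorem exists_enorm_le_measure_support_rpow_mul_eLpNorm'_fderiv [Nontrivial E] (μ : Measure E)
    [μ.IsAddHaarMeasure] {q : ℝ} (hnq : finrank ℝ E < q) :
    ∃ C : NNReal, ∀ u : E → F, ContDiff ℝ 1 u → μ (Function.support u) ≠ ⊤ → ∀ x,
      ‖u x‖ₑ ≤ C * μ (Function.support u) ^ (1 / finrank ℝ E - 1 / q) *
        eLpNorm' (fderiv ℝ u) q μ := by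
  have hn : (1 : ℝ) ≤ finrank ℝ E := by exact_mod_cast finrank_pos (R := ℝ) (M := E)
  have hq : 1 ≤ q := hn.trans hnq.le
  have hω : μ (ball (0 : E) 1) ≠ 0 := (measure_ball_pos μ 0 one_pos).ne'
  set C : ENNReal := (2 / μ (ball 0 1)) ^ (1 / finrank ℝ E : ℝ) *
    (ENNReal.ofReal (1 - finrank ℝ E / q)⁻¹ * 2 ^ (1 - 1 / q)) with hC_def
  have hq1 : 0 ≤ 1 - 1 / q := sub_nonneg.mpr ((div_le_one (by positivity)).mpr hq)
  have hC : C ≠ ⊤ := ENNReal.mul_ne_top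
    (ENNReal.rpow_ne_top_of_nonneg (by positivity) (ENNReal.div_ne_top ENNReal.ofNat_ne_top hω))
    (ENNReal.mul_ne_top ENNReal.ofReal_ne_top
      (ENNReal.rpow_ne_top_of_nonneg hq1 ENNReal.ofNat_ne_top))
  refine ⟨C.toNNReal, fun u hu hsupp x => ?_⟩
  rw [ENNReal.coe_toNNReal hC]
  rcases eq_or_ne (u x) 0 with hx | hx
  · simp [hx]
  set m := μ (Function.support u)
  have hm : m ≠ 0 := (hu.continuous.isOpen_support.measure_pos μ ⟨x, hx⟩).ne'
  obtain ⟨r, hr, hball⟩ := exists_ofReal_eq_and_measure_ball_eq μ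
    (ENNReal.mul_ne_top ENNReal.ofNat_ne_top hsupp : 2 * m ≠ ⊤)
  have hmZ : m ≤ μ (ball 0 r \ (x + ·) ⁻¹' Function.support u) := by
    have := le_measure_sdiff (μ := μ) (s₁ := ball 0 r) (s₂ := (x + ·) ⁻¹' Function.support u)
    rwa [measure_preimage_add, hball, two_mul, ENNReal.add_sub_cancel_right hsupp] at this
  have hexp : m ^ (1 / finrank ℝ E : ℝ) * m ^ (1 - 1 / q) =
      m * m ^ (1 / finrank ℝ E - 1 / q) := by
    rw [← ENNReal.rpow_add _ _ hm hsupp, add_sub_left_comm, ENNReal.rpow_add _ _ hm hsupp,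
      ENNReal.rpow_one]
  rw [← ENNReal.mul_le_mul_iff_right hm hsupp]
  calc m * ‖u x‖ₑ ≤ _ := by gcongr
    _ ≤ _ := measure_mul_enorm_le hu hq hnq x sdiff_subset fun y hy => by simpa using hy.2
    _ = C * (m ^ (1 / finrank ℝ E : ℝ) * m ^ (1 - 1 / q)) * eLpNorm' (fderiv ℝ u) q μ := by
        rw [hr, hball, ENNReal.mul_div_right_comm, ENNReal.mul_rpow_of_nonneg _ _ (by positivity),
          ENNReal.mul_rpow_of_nonneg _ _ hq1, hC_def]
        ring
    _ = m * (C * m ^ (1 / finrank ℝ E - 1 / q) * eLpNorm' (fderiv ℝ u) q μ) := by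
        rw [hexp]
        ring

theorem exists_norm_le_measureReal_rpow_mul_integral_norm_fderiv [Nontrivial E] (μ : Measure E)
    [μ.IsAddHaarMeasure] {q : ℝ} (hnq : finrank ℝ E < q) :
    ∃ C : ℝ, 0 ≤ C ∧ ∀ Ω : Set E, μ Ω ≠ ⊤ → ∀ u : E → F, ContDiff ℝ 1 u → HasCompactSupport u →
      Function.support u ⊆ Ω → ∀ x, ‖u x‖ ≤
        C * μ.real Ω ^ (1 / finrank ℝ E - 1 / q) * (∫ y, ‖fderiv ℝ u y‖ ^ q ∂μ) ^ (1 / q) := by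
  have hn : (0 : ℝ) < finrank ℝ E := by exact_mod_cast finrank_pos (R := ℝ) (M := E)
  have hq : 0 < q := hn.trans hnq
  have hexp : 0 ≤ 1 / finrank ℝ E - 1 / q := sub_nonneg.mpr (one_div_le_one_div_of_le hn hnq.le)
  obtain ⟨C, hC⟩ := exists_enorm_le_measure_support_rpow_mul_eLpNorm'_fderiv (F := F) μ hnq
  refine ⟨C, C.coe_nonneg, fun Ω hΩ u hu hc hsub x => ?_⟩
  have hnorm : eLpNorm' (fderiv ℝ u) q μ =
      ENNReal.ofReal ((∫ y, ‖fderiv ℝ u y‖ ^ q ∂μ) ^ (1 / q)) := by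
    have hmem : MemLp (fderiv ℝ u) (ENNReal.ofReal q) μ :=
      (hu.continuous_fderiv one_ne_zero).memLp_of_hasCompactSupport (hc.fderiv (𝕜 := ℝ))
    have hq0 : ENNReal.ofReal q ≠ 0 := by simpa using hq
    simpa only [eLpNorm_eq_eLpNorm' hq0 ENNReal.ofReal_ne_top, ENNReal.toReal_ofReal hq.le,
      one_div] using hmem.eLpNorm_eq_integral_rpow_norm hq0 ENNReal.ofReal_ne_top
  have hmorrey : ‖u x‖ₑ ≤
      C * μ Ω ^ (1 / finrank ℝ E - 1 / q) * eLpNorm' (fderiv ℝ u) q μ :=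
    (hC u hu (measure_ne_top_of_subset hsub hΩ) x).trans (by gcongr)
  rw [hnorm, ← ofReal_norm, ← ENNReal.ofReal_toReal hΩ, ENNReal.ofReal_rpow_of_nonneg
    ENNReal.toReal_nonneg hexp, ← ENNReal.ofReal_coe_nnreal, ← ENNReal.ofReal_mul C.coe_nonneg,
    ← ENNReal.ofReal_mul (by positivity), ENNReal.ofReal_le_ofReal_iff (by positivity)] at hmorrey
  exact hmorrey

end Morrey

lemma setIntegral_eq_hardyDeficit {E : Type*} [NormedAddCommGroup E] [NormedSpace ℝ E]
    [MeasurableSpace E] {μ : Measure E} {p : ℝ} (hp : p ≠ 0) {u : E → ℝ} {Ω : Set E}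
    (hsub : tsupport u ⊆ Ω) :
    ∫ y in Ω, ‖fderiv ℝ u y‖ ^ p ∂μ
        - ((p - finrank ℝ E) / p) ^ p * ∫ y in Ω, |u y| ^ p / ‖y‖ ^ p ∂μ = hardyDeficit μ p u := by
  rw [hardyDeficit, setIntegral_eq_integral_of_forall_compl_eq_zero fun y hy => ?_,
    setIntegral_eq_integral_of_forall_compl_eq_zero fun y hy => ?_]
  · rfl
  · simp [image_eq_zero_of_notMem_tsupport fun h => hy (hsub h), hp]
  · simp [fderiv_of_notMem_tsupport ℝ fun h => hy (hsub h), hp]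

theorem hardy_sobolev_origin_general {E : Type*} [NormedAddCommGroup E] [InnerProductSpace ℝ E]
    [FiniteDimensional ℝ E] [Nontrivial E] [MeasurableSpace E] [BorelSpace E] (μ : Measure E)
    [μ.IsAddHaarMeasure] {p : ℝ} (hp : finrank ℝ E < p) :
    ∃ C : ℝ, 0 < C ∧ ∀ Ω : Set E, μ Ω ≠ ⊤ → ∀ u : E → ℝ, ContDiff ℝ 1 u →
      HasCompactSupport u → tsupport u ⊆ Ω \ {0} → ∀ x, |u x| ≤
        C * (μ Ω).toReal ^ (1 / (finrank ℝ E : ℝ) - 1 / p) *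
          ((∫ y in Ω, ‖fderiv ℝ u y‖ ^ p ∂μ)
            - ((p - finrank ℝ E) / p) ^ p * ∫ y in Ω, |u y| ^ p / ‖y‖ ^ p ∂μ) ^ (1 / p) := by
  have hn : (1 : ℝ) ≤ finrank ℝ E := by exact_mod_cast finrank_pos (R := ℝ) (M := E)
  obtain ⟨q, hnq, hqp⟩ := exists_between hp
  have hq : 0 < q := by linarith
  obtain ⟨A, hA, hhardy⟩ := exists_integral_norm_fderiv_rpow_le_hardyDeficit μ finrank_pos hnq hqp
  obtain ⟨B, hB, hmorrey⟩ :=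
    exists_norm_le_measureReal_rpow_mul_integral_norm_fderiv (F := ℝ) μ hnq
  refine ⟨B * A ^ (1 / q) + 1, by positivity, fun Ω hΩ u hu hc hsub x => ?_⟩
  have hsubΩ : tsupport u ⊆ Ω := hsub.trans sdiff_subset
  have hdeficit : 0 ≤ hardyDeficit μ p u :=
    hardyDeficit_nonneg hu hc (fun h => (hsub h).2 rfl) (hn.trans_lt hp) hp.le
  rw [setIntegral_eq_hardyDeficit (hq.trans hqp).ne' hsubΩ, ← measureReal_def]
  calc |u x| ≤ B * μ.real Ω ^ (1 / finrank ℝ E - 1 / q) *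
        (∫ y, ‖fderiv ℝ u y‖ ^ q ∂μ) ^ (1 / q) :=
        hmorrey Ω hΩ u hu hc ((subset_tsupport u).trans hsubΩ) x
    _ ≤ B * μ.real Ω ^ (1 / finrank ℝ E - 1 / q) *
        (A * (μ.real Ω ^ (1 - q / p) * hardyDeficit μ p u ^ (q / p))) ^ (1 / q) := by
      gcongr; exact hhardy Ω hΩ u hu hc hsub
    _ = B * A ^ (1 / q) * (μ.real Ω ^ (1 / finrank ℝ E - 1 / p) *
        hardyDeficit μ p u ^ (1 / p)) := by
      rw [Real.mul_rpow hA.le (by positivity), ← rpow_mul_rpow_mul_rpow_rpow_one_div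
        measureReal_nonneg hdeficit hq hqp.le (one_div_le_one_div_of_le (by linarith) hnq.le)]
      ring
    _ ≤ (B * A ^ (1 / q) + 1) * μ.real Ω ^ (1 / finrank ℝ E - 1 / p) *
        hardyDeficit μ p u ^ (1 / p) := by
      rw [mul_assoc (_ + 1)]
      gcongr
      exact le_add_of_nonneg_right zero_le_one

/-- Hardy–Sobolev inequality for `p > n`, distance to the origin. -/
theorem hardy_sobolev_origin (n : ℕ) (hn : 1 ≤ n) (p : ℝ) (hp : (n : ℝ) < p) :
    ∃ C : ℝ, 0 < C ∧
      ∀ Ω : Set (EuclideanSpace ℝ (Fin n)), IsOpen Ω → IsConnected Ω →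
        (0 : EuclideanSpace ℝ (Fin n)) ∈ Ω → volume Ω ≠ ⊤ →
        ∀ u : EuclideanSpace ℝ (Fin n) → ℝ, ContDiff ℝ (⊤ : ℕ∞) u →
          HasCompactSupport u → tsupport u ⊆ Ω \ {0} →
          ∀ x ∈ Ω, |u x| ≤
            C * (volume Ω).toReal ^ (1 / (n : ℝ) - 1 / p) *
              ((∫ y in Ω, ‖fderiv ℝ u y‖ ^ p)
                - ((p - n) / p) ^ p * ∫ y in Ω, |u y| ^ p / ‖y‖ ^ p) ^ (1 / p) := by
  have : NeZero n := ⟨by positivity⟩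
  obtain ⟨C, hC, hbound⟩ := hardy_sobolev_origin_general
    (volume : Measure (EuclideanSpace ℝ (Fin n))) (by simpa using hp)
  simp only [finrank_euclideanSpace_fin] at hbound
  exact ⟨C, hC, fun Ω _ _ _ hΩ u hu hc hsub x _ =>
    hbound Ω hΩ u (hu.of_le (by exact_mod_cast le_top)) hc hsub x⟩
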